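/- Let a > 0. The sequence {e^{2an}}_{n≥1} is a complete interpolating sequence for the small Fock space F_a. -/

import Mathlib

open Filter MeasureTheory

/-- The weight `e^{-(log|w|)²/(2a)}` of the small Fock space. -/
noncomputable def fockWeight (a : ℝ) (w : ℂ) : ℝ :=
  Real.exp (-(Real.log ‖w‖) ^ 2 / (2 * a))

/-- The squared norm of `F` in the small Fock space `𝓕_a`:
`(1/(2√(2πa))) ∫_ℂ |F(w)|² e^{-(log|w|)²/(2a)} dm₂(w)` where `m₂ = (1/π)·`Lebesgue. -/
noncomputable def fockNormSq (a : ℝ) (F : ℂ → ℂ) : ℝ :=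
  (1 / (2 * Real.sqrt (2 * Real.pi * a))) *
    ∫ w : ℂ, ‖F w‖ ^ 2 * fockWeight a w / Real.pi

/-- Membership in the small Fock space `𝓕_a`: `F` is entire with finite `𝓕_a`-norm. -/
def MemFock (a : ℝ) (F : ℂ → ℂ) : Prop :=
  Differentiable ℂ F ∧ Integrable (fun w : ℂ => ‖F w‖ ^ 2 * fockWeight a w)

/-- `φ(w) = (log|w|)²/(4a)`. -/
noncomputable def fockPhi (a : ℝ) (w : ℂ) : ℝ := (Real.log ‖w‖) ^ 2 / (4 * a)

/-- The sampling weight `(1+|w|²) e^{-2φ(w)}`. -/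
noncomputable def fockSampleWeight (a : ℝ) (w : ℂ) : ℝ :=
  (1 + ‖w‖ ^ 2) * Real.exp (-2 * fockPhi a w)

/-- `{w_n}_{n≥1}` is a sampling sequence for `𝓕_a`. -/
def FockSampling (a : ℝ) (w : ℕ → ℂ) : Prop :=
  ∃ A > 0, ∃ B > 0, ∀ F : ℂ → ℂ, MemFock a F →
    A * fockNormSq a F ≤
        (∑' n : {n : ℕ // 1 ≤ n}, fockSampleWeight a (w n) * ‖F (w n)‖ ^ 2) ∧
    (∑' n : {n : ℕ // 1 ≤ n}, fockSampleWeight a (w n) * ‖F (w n)‖ ^ 2) ≤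
        B * fockNormSq a F

/-- `{w_n}_{n≥1}` is an interpolating sequence for `𝓕_a`. -/
def FockInterpolating (a : ℝ) (w : ℕ → ℂ) : Prop :=
  ∀ v : ℕ → ℂ,
    Summable (fun n : {n : ℕ // 1 ≤ n} => fockSampleWeight a (w n) * ‖v n‖ ^ 2) →
    ∃ F : ℂ → ℂ, MemFock a F ∧ ∀ n : ℕ, 1 ≤ n → F (w n) = v n

/-- `{w_n}_{n≥1}` is a complete interpolating sequence for `𝓕_a`. -/
def FockCIS (a : ℝ) (w : ℕ → ℂ) : Prop :=
  FockSampling a w ∧ FockInterpolating a w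

/-!
In polar coordinates, Parseval on circles and a Gaussian integral show that the functions
`e^{-a(k+1)²} w^k` form an orthonormal basis of the small Fock space. In this basis, evaluation at
`w = e^{2a(m+1)}`, normalised by `|w| e^{-φ(w)}`, is given by row `m` of the Toeplitz matrix
`e^{-a(m-k)²}`. As `|w| ≥ 1` at the nodes, the weight `(1 + |w|²) e^{-2φ(w)}` is comparable to the
square of this normalisation, so the theorem amounts to the matrix being invertible on `ℓ²`. It is
bounded by the Schur test. Its entries are the values at `k - m` of the characteristic function of a
centred Gaussian measure of variance `2a`, whose density is bounded below on `[-π, π]`, so by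
Parseval its quadratic form is coercive.
-/

open Complex ComplexConjugate ProbabilityTheory Real
open scoped ENNReal NNReal lp

section Parseval

lemma hasSum_sq_norm_of_orthonormal {𝕜 E ι : Type*} [RCLike 𝕜] [SeminormedAddCommGroup E]
    [InnerProductSpace 𝕜 E] {v : ι → E} (hv : Orthonormal 𝕜 v) {u : ι → 𝕜} {x : E}
    (hx : HasSum (fun i ↦ u i • v i) x) : HasSum (fun i ↦ ‖u i‖ ^ 2) (‖x‖ ^ 2) := by
  refine ((hx.norm).pow 2).congr fun s ↦ ?_
  have h := hv.inner_sum u u s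
  simp only [inner_self_eq_norm_sq_to_K, RCLike.conj_mul] at h
  exact_mod_cast h

lemma intervalIntegral_eq_integral_haarAddCircle {T : ℝ} [Fact (0 < T)] (t : ℝ)
    (f : AddCircle T → ℝ) : ∫ θ in t..t + T, f θ = T * ∫ x, f x ∂AddCircle.haarAddCircle := by
  rw [AddCircle.intervalIntegral_preimage, AddCircle.volume_eq_smul_haarAddCircle,
    integral_smul_measure, ENNReal.toReal_ofReal (Fact.out : 0 < T).le, smul_eq_mul]

lemma sq_norm_toLp {𝕜 X : Type*} [RCLike 𝕜] [TopologicalSpace X] [CompactSpace X]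
    [MeasurableSpace X] [BorelSpace X] (μ : Measure X) [IsFiniteMeasure μ] (f : C(X, 𝕜)) :
    ‖ContinuousMap.toLp 2 μ 𝕜 f‖ ^ 2 = ∫ x, ‖f x‖ ^ 2 ∂μ := by
  have h := ContinuousMap.inner_toLp μ f f
  simp only [inner_self_eq_norm_sq_to_K, RCLike.mul_conj] at h
  rw [← RCLike.ofReal_inj (K := 𝕜), ← integral_ofReal]
  simpa only [RCLike.ofReal_pow] using h

lemma hasSum_integral_sq_norm {ι : Type*} {n : ι → ℤ} (hn : Function.Injective n) {u : ι → ℂ}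
    (hu : Summable fun i ↦ ‖u i‖) {f : ℝ → ℂ}
    (hf : ∀ θ : ℝ, HasSum (fun i ↦ u i * cexp (n i * θ * I)) (f θ)) :
    HasSum (fun i ↦ 2 * π * ‖u i‖ ^ 2) (∫ θ in -π..π, ‖f θ‖ ^ 2) := by
  have : Fact (0 < 2 * π) := ⟨Real.two_pi_pos⟩
  have hsummable : Summable fun i ↦ u i • (fourier (n i) : C(AddCircle (2 * π), ℂ)) :=
    .of_norm (by simpa only [norm_smul, fourier_norm, mul_one] using hu)
  obtain ⟨g, hg⟩ := hsummable
  have hfg : ∀ θ : ℝ, f θ = g θ := fun θ ↦ by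
    refine (hf θ).unique (((ContinuousMap.hasSum_apply hg θ)).congr_fun fun i ↦ ?_)
    rw [ContinuousMap.smul_apply, fourier_coe_apply, smul_eq_mul]
    congr 2
    push_cast
    field_simp
  simp only [hfg]
  have hcircle := intervalIntegral_eq_integral_haarAddCircle (-π) fun x ↦ ‖g x‖ ^ 2
  rw [show -π + 2 * π = π by ring] at hcircle
  rw [hcircle, ← sq_norm_toLp]
  refine (hasSum_sq_norm_of_orthonormal (orthonormal_fourier.comp n hn) ?_).mul_left _
  simpa using hg.mapL (ContinuousMap.toLp 2 AddCircle.haarAddCircle ℂ)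

end Parseval

section Bochner

variable {ι : Type*}

lemma sum_charFun_mul_conj (μ : Measure ℝ) [IsFiniteMeasure μ] (t : ι → ℝ) (b : ι → ℂ)
    (s : Finset ι) :
    ∑ i ∈ s, ∑ j ∈ s, charFun μ (t j - t i) * b j * conj (b i) =
      ∫ x, ‖∑ i ∈ s, b i * cexp (t i * x * I)‖ ^ 2 ∂μ := by
  have hexpand (x : ℝ) : ((‖∑ i ∈ s, b i * cexp (t i * x * I)‖ ^ 2 : ℝ) : ℂ) =
      ∑ i ∈ s, ∑ j ∈ s, cexp ((t j - t i : ℝ) * x * I) * b j * conj (b i) := by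
    rw [ofReal_pow, ← Complex.conj_mul', map_sum, Finset.sum_mul_sum]
    refine Finset.sum_congr rfl fun i _ ↦ Finset.sum_congr rfl fun j _ ↦ ?_
    have hexp : cexp ((t j - t i : ℝ) * x * I) =
        conj (cexp (t i * x * I)) * cexp (t j * x * I) := by
      rw [← Complex.exp_conj, ← Complex.exp_add]
      simp only [map_mul, conj_ofReal, conj_I]
      push_cast
      ring_nf
    rw [hexp, map_mul]
    ring
  have hint (i j : ι) :
      Integrable (fun x : ℝ ↦ cexp ((t j - t i : ℝ) * x * I) * b j * conj (b i)) μ := by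
    refine ((Integrable.of_bound (C := 1) (by fun_prop) (.of_forall fun x ↦ ?_)).mul_const
      _).mul_const _
    rw [← ofReal_mul, norm_exp_ofReal_mul_I]
  simp only [← integral_complex_ofReal, hexpand]
  rw [integral_finsetSum _ fun i _ ↦ integrable_finsetSum _ fun j _ ↦ hint i j]
  refine Finset.sum_congr rfl fun i _ ↦ ?_
  rw [integral_finsetSum _ fun j _ ↦ hint i j]
  simp only [integral_mul_const, charFun_apply_real]

lemma le_re_sum_charFun_mul_conj {μ : Measure ℝ} [IsFiniteMeasure μ] {m : ℝ≥0}
    (hμ : m • volume.restrict (Set.Ioc (-π) π) ≤ μ) {n : ι → ℤ} (hn : Function.Injective n)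
    (s : Finset ι) (b : ι → ℂ) :
    2 * π * m * ∑ i ∈ s, ‖b i‖ ^ 2 ≤
      (∑ i ∈ s, ∑ j ∈ s, charFun μ (n j - n i) * b j * conj (b i)).re := by
  set f : ℝ → ℂ := fun θ ↦ ∑ i ∈ s, b i * cexp (n i * θ * I)
  have hparseval : ∑ i ∈ s, 2 * π * ‖b i‖ ^ 2 = ∫ θ in -π..π, ‖f θ‖ ^ 2 := by
    have h := hasSum_integral_sq_norm (n := fun i : s ↦ n i) (u := fun i ↦ b i) (f := f)
      (hn.comp Subtype.val_injective) .of_finite fun θ ↦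
        s.hasSum fun i ↦ b i * cexp (n i * θ * I)
    exact (s.hasSum fun i ↦ 2 * π * ‖b i‖ ^ 2).unique h
  have hint : Integrable (fun x ↦ ‖f x‖ ^ 2) μ := by
    refine .of_bound (C := (∑ i ∈ s, ‖b i‖) ^ 2) (by fun_prop) (.of_forall fun x ↦ ?_)
    rw [Real.norm_of_nonneg (by positivity)]
    gcongr
    refine norm_sum_le_of_le _ fun i _ ↦ ?_
    rw [norm_mul, ← ofReal_intCast, ← ofReal_mul, norm_exp_ofReal_mul_I, mul_one]
  rw [sum_charFun_mul_conj μ (fun i ↦ (n i : ℝ)), ofReal_re]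
  simp only [ofReal_intCast]
  calc 2 * π * m * ∑ i ∈ s, ‖b i‖ ^ 2
      = m * ∫ θ in -π..π, ‖f θ‖ ^ 2 := by rw [← hparseval, ← Finset.mul_sum]; ring
    _ = ∫ x, ‖f x‖ ^ 2 ∂(m • volume.restrict (Set.Ioc (-π) π)) := by
      rw [integral_smul_nnreal_measure,
        intervalIntegral.integral_of_le (by linarith [pi_pos]), NNReal.smul_def, smul_eq_mul]
    _ ≤ ∫ x, ‖f x‖ ^ 2 ∂μ :=
      integral_mono_measure hμ (.of_forall fun x ↦ by positivity) hint

lemma smul_volume_restrict_le_gaussianReal {v : ℝ≥0} (hv : v ≠ 0) (r : ℝ) :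
    (gaussianPDFReal 0 v r).toNNReal • volume.restrict (Set.Ioc (-r) r) ≤ gaussianReal 0 v := by
  have hpdf : (Set.Ioc (-r) r).indicator (fun _ ↦ gaussianPDF 0 v r) ≤ gaussianPDF 0 v := by
    refine Set.indicator_le fun x hx ↦ ?_
    rw [gaussianPDF, gaussianPDF, gaussianPDFReal, gaussianPDFReal]
    gcongr 3
    simp only [sub_zero, neg_div, neg_le_neg_iff]
    gcongr 1
    exact sq_le_sq' hx.1.le hx.2
  rw [gaussianReal_of_var_ne_zero _ hv]
  calc _ = volume.withDensity ((Set.Ioc (-r) r).indicator (fun _ ↦ gaussianPDF 0 v r)) := by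
        rw [withDensity_indicator measurableSet_Ioc, withDensity_const]; rfl
    _ ≤ _ := withDensity_mono (.of_forall hpdf)

end Bochner

section Matrices

variable {𝕜 ι κ : Type*} [RCLike 𝕜]

lemma hasSum_sq_norm_lp {E : Type*} [NormedAddCommGroup E] (b : ℓ²(ι, E)) :
    HasSum (fun i ↦ ‖b i‖ ^ 2) (‖b‖ ^ 2) := by
  simpa using lp.hasSum_norm (p := 2) (by norm_num) b

lemma summable_mul_of_summable_mul_sq {w f : ι → ℝ} (hw : 0 ≤ w) (hf : 0 ≤ f)
    (hw_sum : Summable w) (hf_sum : Summable fun i ↦ w i * f i ^ 2) :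
    Summable fun i ↦ w i * f i := by
  refine .of_nonneg_of_le (fun i ↦ mul_nonneg (hw i) (hf i)) (fun i ↦ ?_) (hw_sum.add hf_sum)
  nlinarith [mul_nonneg (hw i) (sq_nonneg (f i - 1)), mul_nonneg (hw i) (sq_nonneg (f i)), hw i]

lemma sq_tsum_mul_le {w f : ι → ℝ} (hw : 0 ≤ w) (hf : 0 ≤ f)
    (hw_sum : Summable w) (hf_sum : Summable fun i ↦ w i * f i ^ 2) :
    (∑' i, w i * f i) ^ 2 ≤ (∑' i, w i) * ∑' i, w i * f i ^ 2 := by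
  have h := (summable_mul_of_summable_mul_sq hw hf hw_sum hf_sum).hasSum
  refine le_of_tendsto_of_tendsto' (h.pow 2)
    (Filter.Tendsto.mul hw_sum.hasSum hf_sum.hasSum) fun s ↦ ?_
  exact Finset.sum_sq_le_sum_mul_sum_of_sq_le_mul s (fun i _ ↦ hw i)
    (fun i _ ↦ mul_nonneg (hw i) (sq_nonneg _)) fun i _ ↦ (by ring : (w i * f i) ^ 2 = _).le

/-- `K` is the matrix of the operator `T` in the standard bases of `ℓ²`; convergence of the sums
which compute `T b` from `K` is part of the notion. -/
def HasMatrix (T : ℓ²(κ, 𝕜) →L[𝕜] ℓ²(ι, 𝕜)) (K : ι → κ → 𝕜) : Prop :=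
  ∀ b i, HasSum (fun j ↦ K i j * b j) (T b i)

section Schur

variable {K : ι → κ → 𝕜} {R C : ℝ≥0}

lemma summable_norm_mul_sq_of_schur (hcol : ∀ j, Summable fun i ↦ ‖K i j‖)
    (hC : ∀ j, ∑' i, ‖K i j‖ ≤ C) (b : ℓ²(κ, 𝕜)) (i : ι) :
    Summable fun j ↦ ‖K i j‖ * ‖b j‖ ^ 2 := by
  refine .of_nonneg_of_le (fun j ↦ by positivity) (fun j ↦ ?_)
    ((hasSum_sq_norm_lp b).summable.mul_left (C : ℝ))
  gcongr
  exact ((hcol j).le_tsum i fun _ _ ↦ norm_nonneg _).trans (hC j)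

lemma summable_norm_mul_of_schur (hrow : ∀ i, Summable fun j ↦ ‖K i j‖)
    (hcol : ∀ j, Summable fun i ↦ ‖K i j‖) (hC : ∀ j, ∑' i, ‖K i j‖ ≤ C)
    (b : ℓ²(κ, 𝕜)) (i : ι) : Summable fun j ↦ ‖K i j * b j‖ := by
  simpa only [norm_mul] using summable_mul_of_summable_mul_sq (fun j ↦ norm_nonneg (K i j))
    (fun j ↦ norm_nonneg (b j)) (hrow i) (summable_norm_mul_sq_of_schur hcol hC b i)

lemma sum_sq_norm_le_of_schur (hrow : ∀ i, Summable fun j ↦ ‖K i j‖)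
    (hcol : ∀ j, Summable fun i ↦ ‖K i j‖) (hR : ∀ i, ∑' j, ‖K i j‖ ≤ R)
    (hC : ∀ j, ∑' i, ‖K i j‖ ≤ C) (b : ℓ²(κ, 𝕜)) (s : Finset ι) :
    ∑ i ∈ s, ‖∑' j, K i j * b j‖ ^ 2 ≤ R * (C * ‖b‖ ^ 2) := by
  have hsum := summable_norm_mul_sq_of_schur hcol hC b
  have hpointwise (i : ι) : ‖∑' j, K i j * b j‖ ^ 2 ≤ R * ∑' j, ‖K i j‖ * ‖b j‖ ^ 2 :=
    calc ‖∑' j, K i j * b j‖ ^ 2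
        ≤ (∑' j, ‖K i j‖ * ‖b j‖) ^ 2 := by
          gcongr
          simpa only [norm_mul] using
            norm_tsum_le_tsum_norm (summable_norm_mul_of_schur hrow hcol hC b i)
      _ ≤ (∑' j, ‖K i j‖) * ∑' j, ‖K i j‖ * ‖b j‖ ^ 2 :=
          sq_tsum_mul_le (fun j ↦ norm_nonneg (K i j)) (fun j ↦ norm_nonneg (b j)) (hrow i)
            (hsum i)
      _ ≤ R * ∑' j, ‖K i j‖ * ‖b j‖ ^ 2 := by
          gcongr
          exact hR i
  calc ∑ i ∈ s, ‖∑' j, K i j * b j‖ ^ 2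
      ≤ ∑ i ∈ s, R * ∑' j, ‖K i j‖ * ‖b j‖ ^ 2 := Finset.sum_le_sum fun i _ ↦ hpointwise i
    _ = R * ∑' j, (∑ i ∈ s, ‖K i j‖) * ‖b j‖ ^ 2 := by
        simp only [← Finset.mul_sum, Finset.sum_mul, Summable.tsum_finsetSum fun i _ ↦ hsum i]
    _ ≤ R * ∑' j, C * ‖b j‖ ^ 2 := by
        gcongr with j
        · simpa only [Finset.sum_mul] using summable_sum fun i _ ↦ hsum i
        · exact (hasSum_sq_norm_lp b).summable.mul_left _
        · exact ((hcol j).sum_le_tsum s fun i _ ↦ norm_nonneg _).trans (hC j)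
    _ = R * (C * ‖b‖ ^ 2) := by rw [tsum_mul_left, (hasSum_sq_norm_lp b).tsum_eq]

theorem exists_hasMatrix_of_schur (hrow : ∀ i, Summable fun j ↦ ‖K i j‖)
    (hcol : ∀ j, Summable fun i ↦ ‖K i j‖) (hR : ∀ i, ∑' j, ‖K i j‖ ≤ R)
    (hC : ∀ j, ∑' i, ‖K i j‖ ≤ C) :
    ∃ T : ℓ²(κ, 𝕜) →L[𝕜] ℓ²(ι, 𝕜), HasMatrix T K ∧ ‖T‖ ≤ √(R * C) := by
  have hsum (b : ℓ²(κ, 𝕜)) (i : ι) : Summable fun j ↦ K i j * b j :=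
    (summable_norm_mul_of_schur hrow hcol hC b i).of_norm
  have hbound := sum_sq_norm_le_of_schur hrow hcol hR hC
  let T : ℓ²(κ, 𝕜) →ₗ[𝕜] ℓ²(ι, 𝕜) :=
    { toFun b := ⟨fun i ↦ ∑' j, K i j * b j, memℓp_gen' fun s ↦ by simpa using hbound b s⟩
      map_add' b b' := by
        ext i
        simpa only [lp.coeFn_add, Pi.add_apply, mul_add] using (hsum b i).tsum_add (hsum b' i)
      map_smul' c b := by
        ext i
        simp [← tsum_mul_left, mul_left_comm] }
  refine ⟨T.mkContinuous _ fun b ↦ ?_, fun b i ↦ (hsum b i).hasSum,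
    T.mkContinuous_norm_le (by positivity) _⟩
  refine lp.norm_le_of_forall_sum_le (by norm_num) (by positivity) fun s ↦ ?_
  simpa [mul_pow, T, mul_assoc] using hbound b s

end Schur

theorem HasMatrix.le_re_inner {T : ℓ²(ι, 𝕜) →L[𝕜] ℓ²(ι, 𝕜)} {K : ι → ι → 𝕜} (hT : HasMatrix T K)
    {c : ℝ} (hK : ∀ (s : Finset ι) (b : ι → 𝕜), c * ∑ i ∈ s, ‖b i‖ ^ 2 ≤
      RCLike.re (∑ i ∈ s, ∑ j ∈ s, K i j * b j * conj (b i))) (b : ℓ²(ι, 𝕜)) :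
    c * ‖b‖ ^ 2 ≤ RCLike.re (inner 𝕜 b (T b)) := by
  classical
  have hclosed : IsClosed {x : ℓ²(ι, 𝕜) | c * ‖x‖ ^ 2 ≤ RCLike.re (inner 𝕜 x (T x))} :=
    isClosed_le (by fun_prop) (by fun_prop)
  refine hclosed.mem_of_tendsto (lp.hasSum_single (by norm_num) b) (.of_forall fun s ↦ ?_)
  set x : ℓ²(ι, 𝕜) := ∑ i ∈ s, lp.single 2 i (b i) with hx_def
  have hx (i : ι) : x i = if i ∈ s then b i else 0 := by
    rw [hx_def, lp.coeFn_sum, Finset.sum_apply]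
    simp [lp.single_apply, Pi.single_apply]
  have hnorm : ‖x‖ ^ 2 = ∑ i ∈ s, ‖b i‖ ^ 2 := by
    rw [← (hasSum_sq_norm_lp x).tsum_eq, tsum_eq_sum (s := s) (fun i hi ↦ by simp [hx, hi])]
    exact Finset.sum_congr rfl fun i hi ↦ by simp [hx, hi]
  have hTx (i : ι) : T x i = ∑ j ∈ s, K i j * b j := by
    rw [← (hT x i).tsum_eq, tsum_eq_sum (s := s) (fun j hj ↦ by simp [hx, hj])]
    exact Finset.sum_congr rfl fun j hj ↦ by simp [hx, hj]
  have hinner : inner 𝕜 x (T x) = ∑ i ∈ s, ∑ j ∈ s, K i j * b j * conj (b i) := by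
    rw [lp.inner_eq_tsum, tsum_eq_sum (s := s) (fun i hi ↦ by simp [hx, hi])]
    exact Finset.sum_congr rfl fun i hi ↦ by simp [hx, hi, hTx, Finset.sum_mul]
  rw [Set.mem_ofPred_eq, hnorm, hinner]
  exact hK s b

end Matrices

section GaussianKernel

variable {a : ℝ}

lemma summable_exp_neg_mul_sq_add_mul (ha : 0 < a) (s : ℝ) :
    Summable fun n : ℤ ↦ rexp (-a * n ^ 2 + s * n) := by
  have him : 0 < ((a / π : ℝ) * I : ℂ).im := by
    simpa using div_pos ha pi_pos
  refine ((summable_jacobiTheta₂_term_iff (((-s / (2 * π) : ℝ) : ℂ) * I) _).2 him).norm.congr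
    fun n ↦ ?_
  rw [norm_jacobiTheta₂_term]
  simp only [im_ofReal_mul, I_im, mul_one]
  congr 1
  field_simp
  ring

/-- The Gaussian Toeplitz matrix `e^{-a(m-k)²}`. It is the matrix of evaluation at the nodes
`e^{2a(m+1)}` in the orthonormal basis of the small Fock space, up to normalising the rows. -/
noncomputable def gaussianKernel (a : ℝ) (m k : ℕ) : ℂ :=
  rexp (-a * ((m : ℝ) - k) ^ 2)

lemma norm_gaussianKernel (a : ℝ) (m k : ℕ) :
    ‖gaussianKernel a m k‖ = rexp (-a * ((m : ℝ) - k) ^ 2) := by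
  rw [gaussianKernel, norm_real, norm_of_nonneg (exp_pos _).le]

lemma gaussianKernel_comm (a : ℝ) (m k : ℕ) : gaussianKernel a m k = gaussianKernel a k m := by
  rw [gaussianKernel, gaussianKernel, ← neg_sub, neg_sq]

lemma summable_norm_gaussianKernel_and_tsum_le (ha : 0 < a) (m : ℕ) :
    Summable (fun k ↦ ‖gaussianKernel a m k‖) ∧
      ∑' k, ‖gaussianKernel a m k‖ ≤ ∑' n : ℤ, rexp (-a * n ^ 2) := by
  have hint : Summable fun n : ℤ ↦ rexp (-a * n ^ 2) := by
    simpa using summable_exp_neg_mul_sq_add_mul ha 0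
  have hinj : Function.Injective fun k : ℕ ↦ (m : ℤ) - k := fun k l h ↦ by
    simpa using h
  have hcomp : (fun k ↦ ‖gaussianKernel a m k‖) =
      (fun n : ℤ ↦ rexp (-a * n ^ 2)) ∘ fun k : ℕ ↦ (m : ℤ) - k := by
    ext k
    simp [norm_gaussianKernel]
  rw [hcomp]
  exact ⟨hint.comp_injective hinj,
    tsum_comp_le_tsum_of_inj hint (fun n ↦ (exp_pos _).le) hinj⟩

lemma gaussianKernel_eq_charFun (ha : 0 ≤ a) (m k : ℕ) :
    gaussianKernel a m k = charFun (gaussianReal 0 (2 * a).toNNReal) ((k : ℝ) - m) := by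
  rw [charFun_gaussianReal, Real.coe_toNNReal _ (by positivity), gaussianKernel]
  push_cast
  ring_nf

lemma le_re_sum_gaussianKernel (ha : 0 < a) (s : Finset ℕ) (b : ℕ → ℂ) :
    2 * π * gaussianPDFReal 0 (2 * a).toNNReal π * ∑ m ∈ s, ‖b m‖ ^ 2 ≤
      (∑ m ∈ s, ∑ k ∈ s, gaussianKernel a m k * b k * conj (b m)).re := by
  have hv : (2 * a).toNNReal ≠ 0 := by simpa using ha
  have h := le_re_sum_charFun_mul_conj (smul_volume_restrict_le_gaussianReal hv π)
    Nat.cast_injective s b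
  rw [Real.coe_toNNReal _ (gaussianPDFReal_nonneg _ _ _)] at h
  simpa only [gaussianKernel_eq_charFun ha.le, Int.cast_natCast] using h

theorem exists_equiv_hasMatrix_gaussianKernel (ha : 0 < a) :
    ∃ T : ℓ²(ℕ, ℂ) ≃L[ℂ] ℓ²(ℕ, ℂ), HasMatrix T.toContinuousLinearMap (gaussianKernel a) := by
  have hrow := summable_norm_gaussianKernel_and_tsum_le ha
  set R : ℝ≥0 := (∑' n : ℤ, rexp (-a * n ^ 2)).toNNReal
  have hR (m : ℕ) : ∑' k, ‖gaussianKernel a m k‖ ≤ R := (hrow m).2.trans (le_coe_toNNReal _)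
  obtain ⟨T, hT, -⟩ := exists_hasMatrix_of_schur (fun m ↦ (hrow m).1)
    (fun k ↦ by simpa only [gaussianKernel_comm a _ k] using (hrow k).1) hR
    (fun k ↦ by simpa only [gaussianKernel_comm a _ k] using hR k)
  set c : ℝ := 2 * π * gaussianPDFReal 0 (2 * a).toNNReal π
  have hc : 0 < c := by
    have := gaussianPDFReal_pos 0 (2 * a).toNNReal π (by simpa using ha)
    positivity
  have hunit : IsUnit T := by
    refine T.isUnit_of_forall_le_norm_inner_map (c := ⟨c, hc.le⟩) hc fun b ↦ ?_
    rw [norm_inner_symm, mul_comm]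
    exact (hT.le_re_inner (le_re_sum_gaussianKernel ha) b).trans (re_le_norm _)
  exact ⟨.ofUnit hunit.unit, hT⟩

end GaussianKernel

section PowerSeries

variable {c : ℕ → ℂ} {F : ℂ → ℂ}

lemma differentiable_of_hasSum_pow (hF : ∀ z, HasSum (fun k ↦ c k * z ^ k) (F z)) :
    Differentiable ℂ F := by
  intro z
  obtain ⟨R, hR⟩ := exists_gt ‖z‖
  have hbound (k : ℕ) (w : ℂ) (hw : w ∈ Metric.ball 0 R) :
      ‖c k * w ^ k‖ ≤ ‖c k * (R : ℂ) ^ k‖ := by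
    have hwR : ‖w‖ ≤ ‖(R : ℂ)‖ := by
      rw [norm_real]
      exact (mem_ball_zero_iff.1 hw).le.trans (le_abs_self R)
    rw [norm_mul, norm_mul, norm_pow, norm_pow]
    gcongr
  have hdiff := differentiableOn_tsum_of_summable_norm (hF R).summable.norm
    (fun k ↦ by fun_prop) Metric.isOpen_ball hbound
  simp only [fun w ↦ (hF w).tsum_eq] at hdiff
  exact hdiff.differentiableAt (Metric.isOpen_ball.mem_nhds (mem_ball_zero_iff.2 hR))

lemma lintegral_enorm_sq_polarCoord_symm (hF : ∀ z, HasSum (fun k ↦ c k * z ^ k) (F z)) {r : ℝ}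
    (hr : 0 ≤ r) :
    ∫⁻ θ in Set.Ioo (-π) π, ‖F (Complex.polarCoord.symm (r, θ))‖ₑ ^ 2 =
      ENNReal.ofReal (2 * π) * ∑' k, ‖c k‖ₑ ^ 2 * ENNReal.ofReal (r ^ (2 * k)) := by
  set f : ℝ → ℂ := fun θ ↦ F (Complex.polarCoord.symm (r, θ)) with hf_def
  have hf (θ : ℝ) : HasSum (fun k : ℕ ↦ c k * (r : ℂ) ^ k * cexp ((k : ℤ) * θ * I)) (f θ) := by
    refine (hF _).congr_fun fun k ↦ ?_
    rw [Complex.polarCoord_symm_apply, ofReal_cos, ofReal_sin, ← exp_mul_I, mul_pow,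
      ← Complex.exp_nat_mul, mul_assoc]
    push_cast
    ring_nf
  have hcont : Continuous f := by
    have := (differentiable_of_hasSum_pow hF).continuous
    simp only [hf_def, Complex.polarCoord_symm_apply]
    fun_prop
  have hparseval := hasSum_integral_sq_norm Nat.cast_injective (hF r).summable.norm hf
  calc ∫⁻ θ in Set.Ioo (-π) π, ‖f θ‖ₑ ^ 2
      = ENNReal.ofReal (∫ θ in -π..π, ‖f θ‖ ^ 2) := by
        rw [intervalIntegral.integral_of_le (by linarith [pi_pos]),
          integral_Ioc_eq_integral_Ioo, ofReal_integral_eq_lintegral_ofReal]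
        · simp only [← enorm_norm (f _), Real.enorm_eq_ofReal (norm_nonneg _),
            ENNReal.ofReal_pow (norm_nonneg _)]
        · exact (by fun_prop : Continuous fun θ ↦ ‖f θ‖ ^ 2).integrableOn_Icc.mono_set
            Set.Ioo_subset_Icc_self
        · exact .of_forall fun θ ↦ by positivity
    _ = ∑' k, ENNReal.ofReal (2 * π * ‖c k * (r : ℂ) ^ k‖ ^ 2) := by
        rw [← hparseval.tsum_eq,
          ENNReal.ofReal_tsum_of_nonneg (fun k ↦ by positivity) hparseval.summable]
    _ = ENNReal.ofReal (2 * π) * ∑' k, ‖c k‖ₑ ^ 2 * ENNReal.ofReal (r ^ (2 * k)) := by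
        rw [← ENNReal.tsum_mul_left]
        refine tsum_congr fun k ↦ ?_
        rw [← ofReal_norm, ← ENNReal.ofReal_pow (norm_nonneg _),
          ← ENNReal.ofReal_mul (by positivity), ← ENNReal.ofReal_mul (by positivity), norm_mul,
          norm_pow, norm_real, norm_of_nonneg hr, mul_pow, ← pow_mul, mul_comm k]

lemma lintegral_enorm_sq_mul_radial (hF : ∀ z, HasSum (fun k ↦ c k * z ^ k) (F z))
    {ρ : ℝ → ℝ≥0∞} (hρ : Measurable ρ) :
    ∫⁻ w, ‖F w‖ₑ ^ 2 * ρ ‖w‖ = ENNReal.ofReal (2 * π) *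
      ∑' k, ‖c k‖ₑ ^ 2 * ∫⁻ r in Set.Ioi 0, ENNReal.ofReal (r ^ (2 * k + 1)) * ρ r := by
  have hpolar : Continuous fun p : ℝ × ℝ ↦ Complex.polarCoord.symm p := by
    simp only [Complex.polarCoord_symm_apply]
    fun_prop
  have hFpolar : Measurable fun p : ℝ × ℝ ↦ ‖F (Complex.polarCoord.symm p)‖ₑ ^ 2 :=
    ((differentiable_of_hasSum_pow hF).continuous.comp hpolar).measurable.enorm.pow_const 2
  have hcircle (r : ℝ) (hr : r ∈ Set.Ioi 0) :
      ∫⁻ θ in Set.Ioo (-π) π, ENNReal.ofReal r • (‖F (Complex.polarCoord.symm (r, θ))‖ₑ ^ 2 *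
        ρ ‖Complex.polarCoord.symm (r, θ)‖) =
      ENNReal.ofReal (2 * π) * ∑' k, ‖c k‖ₑ ^ 2 * (ENNReal.ofReal (r ^ (2 * k + 1)) * ρ r) := by
    have hr0 : 0 < r := hr
    simp only [Complex.norm_polarCoord_symm, abs_of_pos hr0, smul_eq_mul]
    have hm : Measurable fun θ ↦ ‖F (Complex.polarCoord.symm (r, θ))‖ₑ ^ 2 :=
      hFpolar.comp measurable_prodMk_left
    rw [lintegral_const_mul _ (hm.mul_const _), lintegral_mul_const _ hm,
      lintegral_enorm_sq_polarCoord_symm hF hr0.le, mul_assoc, mul_left_comm,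
      ← ENNReal.tsum_mul_right, ← ENNReal.tsum_mul_left]
    congr 2 with k
    rw [pow_succ r, ENNReal.ofReal_mul (by positivity)]
    ring
  have hmeas : Measurable fun p : ℝ × ℝ ↦ ENNReal.ofReal p.1 •
      (‖F (Complex.polarCoord.symm p)‖ₑ ^ 2 * ρ ‖Complex.polarCoord.symm p‖) := by
    simp only [smul_eq_mul]
    fun_prop
  rw [← Complex.lintegral_comp_polarCoord_symm, polarCoord_target, Measure.volume_eq_prod,
    ← Measure.prod_restrict, lintegral_prod _ hmeas.aemeasurable,
    setLIntegral_congr_fun measurableSet_Ioi hcircle, lintegral_const_mul _ (by fun_prop),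
    lintegral_tsum fun k ↦ by fun_prop]
  congr 2 with k
  exact lintegral_const_mul _ (by fun_prop)

end PowerSeries

lemma lintegral_pow_mul_exp_neg_log_sq {a : ℝ} (ha : 0 < a) (n : ℕ) :
    ∫⁻ r in Set.Ioi 0,
        ENNReal.ofReal (r ^ n) * ENNReal.ofReal (rexp (-Real.log r ^ 2 / (2 * a))) =
      ENNReal.ofReal (√(2 * π * a) * rexp (a * (n + 1) ^ 2 / 2)) := by
  set g : ℝ → ℝ := fun t ↦ rexp (-(1 / (2 * a)) * t ^ 2) * rexp (a * (n + 1) ^ 2 / 2)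
  have hsubst (t : ℝ) : ENNReal.ofReal |rexp t| * (ENNReal.ofReal (rexp t ^ n) *
      ENNReal.ofReal (rexp (-Real.log (rexp t) ^ 2 / (2 * a)))) =
      ENNReal.ofReal (g (t - a * (n + 1))) := by
    rw [abs_of_pos (exp_pos t), ← ENNReal.ofReal_mul (by positivity),
      ← ENNReal.ofReal_mul (by positivity), Real.log_exp, ← Real.exp_nat_mul, ← Real.exp_add,
      ← Real.exp_add]
    simp only [g, ← Real.exp_add]
    congr 2
    field_simp
    ring
  have hg : Integrable g := (integrable_exp_neg_mul_sq (by positivity)).mul_const _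
  calc _ = ∫⁻ t, ENNReal.ofReal (g (t - a * (n + 1))) := by
        rw [← Real.range_exp, ← Set.image_univ, lintegral_image_eq_lintegral_abs_deriv_mul .univ
          (fun t _ ↦ (Real.hasDerivAt_exp t).hasDerivWithinAt) Real.exp_injective.injOn,
          setLIntegral_univ]
        exact lintegral_congr hsubst
    _ = ENNReal.ofReal (∫ t, g t) := by
        rw [lintegral_sub_right_eq_self (fun t ↦ ENNReal.ofReal (g t)),
          ofReal_integral_eq_lintegral_ofReal hg (.of_forall fun t ↦ by positivity)]
    _ = _ := by
        rw [integral_mul_const, integral_gaussian]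
        congr 3
        field_simp

section FockSpace

variable {a : ℝ} {b : ℕ → ℂ} {F : ℂ → ℂ}

/-- `F` is the entire function with coefficients `b` in the orthonormal basis
`w ↦ e^{-a(k+1)²} w^k` of the small Fock space. No decay of `b` is required, so that membership of
`F` in the space can be expressed as a condition on `b`. -/
def HasFockCoeffs (a : ℝ) (b : ℕ → ℂ) (F : ℂ → ℂ) : Prop :=
  ∀ w, HasSum (fun k : ℕ ↦ (rexp (-a * (k + 1) ^ 2) * b k) * w ^ k) (F w)

lemma exists_hasFockCoeffs_of_differentiable (a : ℝ) (hF : Differentiable ℂ F) :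
    ∃ b, HasFockCoeffs a b F := by
  refine ⟨fun k ↦ rexp (a * (k + 1) ^ 2) * ((k.factorial : ℂ)⁻¹ * iteratedDeriv k F 0),
    fun w ↦ (hasSum_taylorSeries_of_entire hF 0 w).congr_fun fun k ↦ ?_⟩
  have hcancel : (rexp (-a * (k + 1) ^ 2) : ℂ) * rexp (a * (k + 1) ^ 2) = 1 := by
    rw [← ofReal_mul, ← Real.exp_add, neg_mul, neg_add_cancel, Real.exp_zero, ofReal_one]
  rw [← mul_assoc, hcancel, one_mul, smul_eq_mul, smul_eq_mul, sub_zero]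
  ring

lemma exists_hasFockCoeffs_of_bounded (ha : 0 < a) {M : ℝ} (hb : ∀ k, ‖b k‖ ≤ M) :
    ∃ F, HasFockCoeffs a b F := by
  suffices h : ∀ w : ℂ, Summable fun k : ℕ ↦ (rexp (-a * (k + 1) ^ 2) * b k) * w ^ k from
    ⟨_, fun w ↦ (h w).hasSum⟩
  intro w
  have hgauss : Summable fun k : ℕ ↦ rexp (-a * k ^ 2 + ‖w‖ * k) * M := by
    simpa using ((summable_exp_neg_mul_sq_add_mul ha ‖w‖).comp_injective
      Nat.cast_injective).mul_right M
  refine hgauss.of_norm_bounded fun k ↦ ?_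
  rw [norm_mul, norm_mul, norm_pow, norm_real, norm_of_nonneg (exp_pos _).le]
  have hpow : ‖w‖ ^ k ≤ rexp (‖w‖ * k) := by
    rw [mul_comm, Real.exp_nat_mul]
    gcongr
    linarith [Real.add_one_le_exp ‖w‖]
  calc rexp (-a * (k + 1) ^ 2) * ‖b k‖ * ‖w‖ ^ k
      ≤ rexp (-a * k ^ 2) * M * rexp (‖w‖ * k) := by
        have hM : 0 ≤ M := (norm_nonneg _).trans (hb k)
        simp only [neg_mul]
        gcongr
        · exact le_add_of_nonneg_right zero_le_one
        · exact hb k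
    _ = rexp (-a * k ^ 2 + ‖w‖ * k) * M := by rw [Real.exp_add]; ring

namespace HasFockCoeffs

lemma differentiable (hF : HasFockCoeffs a b F) : Differentiable ℂ F :=
  differentiable_of_hasSum_pow hF

lemma lintegral_eq (ha : 0 < a) (hF : HasFockCoeffs a b F) :
    ∫⁻ w, ENNReal.ofReal (‖F w‖ ^ 2 * fockWeight a w) =
      ENNReal.ofReal (2 * π * √(2 * π * a)) * ∑' k, ‖b k‖ₑ ^ 2 := by
  have hterm (k : ℕ) : ‖(rexp (-a * (k + 1) ^ 2) : ℂ) * b k‖ₑ ^ 2 *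
      ∫⁻ r in Set.Ioi 0, ENNReal.ofReal (r ^ (2 * k + 1)) *
        ENNReal.ofReal (rexp (-Real.log r ^ 2 / (2 * a))) =
      ENNReal.ofReal √(2 * π * a) * ‖b k‖ₑ ^ 2 := by
    rw [lintegral_pow_mul_exp_neg_log_sq ha, ← ofReal_norm, ← ofReal_norm,
      ← ENNReal.ofReal_pow (by positivity), ← ENNReal.ofReal_pow (by positivity),
      ← ENNReal.ofReal_mul (by positivity), ← ENNReal.ofReal_mul (by positivity), norm_mul,
      norm_real, norm_of_nonneg (exp_pos _).le, mul_pow, ← Real.exp_nat_mul]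
    have hexp : rexp ((2 : ℕ) * (-a * (k + 1) ^ 2)) *
        rexp (a * ((2 * k + 1 : ℕ) + 1) ^ 2 / 2) = 1 := by
      rw [← Real.exp_add, Real.exp_eq_one_iff]
      push_cast
      ring
    congr 1
    linear_combination √(2 * π * a) * ‖b k‖ ^ 2 * hexp
  calc _ = ∫⁻ w, ‖F w‖ₑ ^ 2 * ENNReal.ofReal (rexp (-Real.log ‖w‖ ^ 2 / (2 * a))) := by
        refine lintegral_congr fun w ↦ ?_
        rw [fockWeight, ENNReal.ofReal_mul (by positivity), ENNReal.ofReal_pow (norm_nonneg _),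
          ofReal_norm]
    _ = _ := by
        rw [lintegral_enorm_sq_mul_radial hF
          (ρ := fun r ↦ ENNReal.ofReal (rexp (-Real.log r ^ 2 / (2 * a)))) (by fun_prop)]
        simp only [hterm]
        rw [ENNReal.tsum_mul_left, ← mul_assoc, ← ENNReal.ofReal_mul (by positivity)]

lemma aestronglyMeasurable (hF : HasFockCoeffs a b F) :
    AEStronglyMeasurable fun w ↦ ‖F w‖ ^ 2 * fockWeight a w := by
  have hFc : Measurable F := hF.differentiable.continuous.measurable
  unfold fockWeight
  exact Measurable.aestronglyMeasurable (by fun_prop)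

lemma fockNormSq_eq (ha : 0 < a) (hF : HasFockCoeffs a b F) :
    fockNormSq a F = ∑' k, ‖b k‖ ^ 2 := by
  have hnonneg : 0 ≤ᵐ[volume] fun w ↦ ‖F w‖ ^ 2 * fockWeight a w :=
    .of_forall fun w ↦ by unfold fockWeight; positivity
  rw [fockNormSq, integral_div, integral_eq_lintegral_of_nonneg_ae hnonneg hF.aestronglyMeasurable,
    hF.lintegral_eq ha, ENNReal.toReal_mul, ENNReal.toReal_ofReal (by positivity),
    ENNReal.tsum_toReal_eq fun k ↦ by finiteness]
  simp only [ENNReal.toReal_pow, toReal_enorm]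
  field_simp

lemma memFock_iff (ha : 0 < a) (hF : HasFockCoeffs a b F) :
    MemFock a F ↔ Summable fun k ↦ ‖b k‖ ^ 2 := by
  have hnonneg : 0 ≤ᵐ[volume] fun w ↦ ‖F w‖ ^ 2 * fockWeight a w :=
    .of_forall fun w ↦ by unfold fockWeight; positivity
  have hconst : ENNReal.ofReal (2 * π * √(2 * π * a)) ≠ 0 := by
    rw [ENNReal.ofReal_ne_zero_iff]
    positivity
  have htsum : ∑' k, ‖b k‖ₑ ^ 2 ≠ ∞ ↔ Summable fun k ↦ ‖b k‖ ^ 2 := by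
    simp only [← enorm_pow, ← norm_pow]
    exact tsum_enorm_ne_top_iff_summable_norm
  rw [MemFock, and_iff_right hF.differentiable, Integrable,
    and_iff_right hF.aestronglyMeasurable, hasFiniteIntegral_iff_ofReal hnonneg,
    hF.lintegral_eq ha, ← htsum, lt_top_iff_ne_top, Ne, ENNReal.mul_eq_top]
  simp [hconst]

end HasFockCoeffs

lemma exists_memFock_hasFockCoeffs (ha : 0 < a) (b : ℓ²(ℕ, ℂ)) :
    ∃ F, MemFock a F ∧ HasFockCoeffs a b F := by
  obtain ⟨F, hF⟩ := exists_hasFockCoeffs_of_bounded ha fun k ↦ lp.norm_apply_le_norm two_ne_zero b k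
  exact ⟨F, (hF.memFock_iff ha).2 (hasSum_sq_norm_lp b).summable, hF⟩

lemma MemFock.exists_hasFockCoeffs (ha : 0 < a) (hF : MemFock a F) :
    ∃ b : ℓ²(ℕ, ℂ), HasFockCoeffs a b F ∧ ‖b‖ ^ 2 = fockNormSq a F := by
  obtain ⟨b, hb⟩ := exists_hasFockCoeffs_of_differentiable a hF.1
  have hmem : Memℓp b 2 := memℓp_gen (by simpa using (hb.memFock_iff ha).1 hF)
  refine ⟨⟨b, hmem⟩, hb, ?_⟩
  rw [hb.fockNormSq_eq ha, ← (hasSum_sq_norm_lp _).tsum_eq]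

end FockSpace

section Nodes

variable {a : ℝ}

/-- The values at `e^{2an}`, `n = m + 1`, of a function with values `v n` there, multiplied by
`e^{2an - an²}`, which is `|w| e^{-φ(w)}` at `w = e^{2an}`. -/
noncomputable def normalizedValues (a : ℝ) (v : ℕ → ℂ) (m : ℕ) : ℂ :=
  rexp (2 * a * (m + 1 : ℕ) - a * (m + 1 : ℕ) ^ 2) * v (m + 1)

lemma HasFockCoeffs.hasSum_gaussianKernel {b : ℕ → ℂ} {F : ℂ → ℂ} (hF : HasFockCoeffs a b F)
    (m : ℕ) :
    HasSum (fun k ↦ gaussianKernel a m k * b k)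
      (normalizedValues a (fun n ↦ F (rexp (2 * a * n) : ℝ)) m) := by
  refine ((hF _).mul_left _).congr_fun fun k ↦ ?_
  have hexp : -a * ((m : ℝ) - k) ^ 2 = 2 * a * (m + 1 : ℕ) - a * (m + 1 : ℕ) ^ 2 +
      (-a * (k + 1) ^ 2 + k * (2 * a * (m + 1 : ℕ))) := by
    push_cast
    ring
  rw [gaussianKernel, hexp, Real.exp_add, Real.exp_add, Real.exp_nat_mul]
  push_cast
  ring

lemma fockSampleWeight_exp (ha : a ≠ 0) (n : ℕ) :
    fockSampleWeight a (rexp (2 * a * n) : ℝ) =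
      (1 + rexp (-(4 * a * n))) * rexp (2 * a * n - a * n ^ 2) ^ 2 := by
  rw [fockSampleWeight, fockPhi, norm_real, norm_of_nonneg (exp_pos _).le, Real.log_exp, add_comm,
    add_mul, add_mul, one_mul, one_mul, ← Real.exp_nat_mul, ← Real.exp_nat_mul, ← Real.exp_add,
    ← Real.exp_add]
  congr 2
  all_goals
    push_cast
    field_simp
    ring

lemma sq_norm_normalizedValues_le (ha : a ≠ 0) (v : ℕ → ℂ) (m : ℕ) :
    ‖normalizedValues a v m‖ ^ 2 ≤
      fockSampleWeight a (rexp (2 * a * (m + 1 : ℕ)) : ℝ) * ‖v (m + 1)‖ ^ 2 := by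
  rw [fockSampleWeight_exp ha, normalizedValues, norm_mul, norm_real,
    norm_of_nonneg (exp_pos _).le, mul_pow]
  gcongr
  exact le_mul_of_one_le_left (sq_nonneg _) (le_add_of_nonneg_right (exp_pos _).le)

lemma fockSampleWeight_mul_sq_norm_le (ha : 0 < a) (v : ℕ → ℂ) (m : ℕ) :
    fockSampleWeight a (rexp (2 * a * (m + 1 : ℕ)) : ℝ) * ‖v (m + 1)‖ ^ 2 ≤
      2 * ‖normalizedValues a v m‖ ^ 2 := by
  rw [fockSampleWeight_exp ha.ne', normalizedValues, norm_mul, norm_real,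
    norm_of_nonneg (exp_pos _).le, mul_pow, mul_assoc]
  have hexp : rexp (-(4 * a * (m + 1 : ℕ))) ≤ 1 := by
    rw [Real.exp_le_one_iff, neg_nonpos]
    positivity
  gcongr
  linarith

lemma summable_subtype_one_le_iff {α : Type*} [AddCommMonoid α] [TopologicalSpace α] {f : ℕ → α} :
    (Summable fun n : {n : ℕ // 1 ≤ n} ↦ f n) ↔ Summable fun m ↦ f (m + 1) :=
  Equiv.pnatEquivNat.symm.summable_iff.symm

lemma tsum_subtype_one_le {α : Type*} [AddCommMonoid α] [TopologicalSpace α] (f : ℕ → α) :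
    ∑' n : {n : ℕ // 1 ≤ n}, f n = ∑' m, f (m + 1) :=
  (Equiv.pnatEquivNat.symm.tsum_eq fun n : {n : ℕ // 1 ≤ n} ↦ f n).symm

lemma tsum_fockSampleWeight_mem_Icc (ha : 0 < a) {y : ℓ²(ℕ, ℂ)} {v : ℕ → ℂ}
    (hy : ∀ m, y m = normalizedValues a v m) :
    ∑' n : {n : ℕ // 1 ≤ n}, fockSampleWeight a (rexp (2 * a * (n : ℕ)) : ℝ) * ‖v n‖ ^ 2 ∈
      Set.Icc (‖y‖ ^ 2) (2 * ‖y‖ ^ 2) := by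
  have hlower (m : ℕ) := hy m ▸ sq_norm_normalizedValues_le ha.ne' v m
  have hupper (m : ℕ) := hy m ▸ fockSampleWeight_mul_sq_norm_le ha v m
  have hnorm := hasSum_sq_norm_lp y
  have hsum := (hnorm.summable.mul_left 2).of_nonneg_of_le
    (fun m ↦ (sq_nonneg _).trans (hlower m)) hupper
  rw [tsum_subtype_one_le fun n ↦ fockSampleWeight a (rexp (2 * a * n) : ℝ) * ‖v n‖ ^ 2]
  exact ⟨hasSum_le hlower hnorm hsum.hasSum, hasSum_le hupper hsum.hasSum (hnorm.mul_left 2)⟩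

theorem fockSampling_exp (ha : 0 < a) : FockSampling a fun n ↦ (rexp (2 * a * n) : ℝ) := by
  obtain ⟨T, hT⟩ := exists_equiv_hasMatrix_gaussianKernel ha
  obtain ⟨C, hC, hle⟩ := T.symm.toContinuousLinearMap.bound
  obtain ⟨D, hD, hge⟩ := T.toContinuousLinearMap.bound
  refine ⟨(C ^ 2)⁻¹, by positivity, 2 * D ^ 2, by positivity, fun F hF ↦ ?_⟩
  obtain ⟨b, hb, hnorm⟩ := hF.exists_hasFockCoeffs ha
  have hvalues (m : ℕ) : T b m = normalizedValues a (fun n ↦ F (rexp (2 * a * n) : ℝ)) m :=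
    (hT b m).unique (hb.hasSum_gaussianKernel m)
  obtain ⟨hlower, hupper⟩ := tsum_fockSampleWeight_mem_Icc ha hvalues
  rw [← hnorm]
  constructor
  · refine le_trans ?_ hlower
    rw [inv_mul_le_iff₀ (by positivity), ← mul_pow]
    gcongr
    simpa using hle (T b)
  · refine hupper.trans ?_
    rw [mul_assoc, ← mul_pow]
    gcongr
    exact hge b

theorem fockInterpolating_exp (ha : 0 < a) :
    FockInterpolating a fun n ↦ (rexp (2 * a * n) : ℝ) := by
  intro v hv
  obtain ⟨T, hT⟩ := exists_equiv_hasMatrix_gaussianKernel ha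
  have hsum := (summable_subtype_one_le_iff
    (f := fun n ↦ fockSampleWeight a (rexp (2 * a * n) : ℝ) * ‖v n‖ ^ 2)).1 hv
  have hsq : Summable fun m ↦ ‖normalizedValues a v m‖ ^ 2 :=
    hsum.of_nonneg_of_le (fun m ↦ sq_nonneg _) (sq_norm_normalizedValues_le ha.ne' v)
  have hmem : Memℓp (normalizedValues a v) 2 := memℓp_gen (by simpa using hsq)
  obtain ⟨F, hF, hcoeffs⟩ := exists_memFock_hasFockCoeffs ha (T.symm ⟨_, hmem⟩)
  refine ⟨F, hF, fun n hn ↦ ?_⟩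
  obtain ⟨m, rfl⟩ := Nat.exists_eq_add_of_le' hn
  have hvalue := (hcoeffs.hasSum_gaussianKernel m).unique (hT _ m)
  rw [ContinuousLinearEquiv.coe_coe, T.apply_symm_apply] at hvalue
  exact mul_left_cancel₀ (ofReal_ne_zero.2 (exp_pos _).ne') hvalue

end Nodes

/-- from [BL]: the sequence `{e^{2an}}_{n≥1}` is a complete interpolating
sequence for the small Fock space `𝓕_a`. -/
theorem statement16 (a : ℝ) (ha : 0 < a) :
    FockCIS a (fun n : ℕ => ((Real.exp (2 * a * n) : ℝ) : ℂ)) :=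
  ⟨fockSampling_exp ha, fockInterpolating_exp ha⟩
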